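/- Let u ∈ L¹(Q_T) be a nonnegative subsolution of ∂_t u − Δu + g(u) = 0 in Q_T such that g∘u ∈ L¹(Q_T). Then there exist a relatively closed set S ⊂ Ω and a positive Radon measure ν on the open set R := Ω ∖ S such that: (i) for every φ ∈ C_c(R), ess lim_{t→0} ∫_Ω u(·,t) φ dx = ∫_R φ dν, and (ii) for every nonnegative φ ∈ C_c(Ω) with φ > 0 somewhere on S, ess lim_{t→0} ∫_Ω u(·,t) φ dx = +∞. In other words, the initial trace of u is the positive outer regular Borel measure associated with the pair (S, ν). -/

import Mathlib

open MeasureTheory Set Filter Topology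
open scoped ENNReal NNReal

noncomputable section

/-- Euclidean space `ℝ^N`. -/
abbrev Euc (N : ℕ) : Type := EuclideanSpace ℝ (Fin N)

/-- `ρ(x) = dist(x, ∂Ω)`, realized as the distance from `x` to the complement of `Ω`. -/
def rho {N : ℕ} (Ω : Set (Euc N)) (x : Euc N) : ℝ := Metric.infDist x Ωᶜ

/-- The Laplacian (in the space variable) of `f : ℝ^N → ℝ`. -/
def lap {N : ℕ} (f : Euc N → ℝ) (x : Euc N) : ℝ :=
  ∑ i : Fin N, fderiv ℝ (fun y => fderiv ℝ f y (EuclideanSpace.single i 1)) x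
    (EuclideanSpace.single i 1)

/-- The parabolic cylinder `Q_T = Ω × (0,T)`. -/
def QT {N : ℕ} (Ω : Set (Euc N)) (T : ℝ) : Set (Euc N × ℝ) := Ω ×ˢ Ioo 0 T

/-- `∂_t ζ + Δ ζ` for a function `ζ(x,t)` (curried). -/
def heatAdj {N : ℕ} (ζ : Euc N → ℝ → ℝ) (p : Euc N × ℝ) : ℝ :=
  deriv (ζ p.1) p.2 + lap (fun y => ζ y p.2) p.1

/-- `C^{2,1}` regularity: `ζ`, `∂_t ζ`, `∇_x ζ` and `D²_x ζ` exist and are continuous. -/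
def C21 {N : ℕ} (ζ : Euc N → ℝ → ℝ) : Prop :=
  Continuous (fun p : Euc N × ℝ => ζ p.1 p.2) ∧
  (∀ (x : Euc N) (t : ℝ), DifferentiableAt ℝ (ζ x) t) ∧
  Continuous (fun p : Euc N × ℝ => deriv (ζ p.1) p.2) ∧
  (∀ (t : ℝ) (x : Euc N), DifferentiableAt ℝ (fun y => ζ y t) x) ∧
  Continuous (fun p : Euc N × ℝ => fderiv ℝ (fun y => ζ y p.2) p.1) ∧
  (∀ (t : ℝ) (x : Euc N), DifferentiableAt ℝ (fun y => fderiv ℝ (fun z => ζ z t) y) x) ∧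
  Continuous (fun p : Euc N × ℝ => fderiv ℝ (fun y => fderiv ℝ (fun z => ζ z p.2) y) p.1)

/-- Membership in `C^{2,1}_{ℓ,0}(Q̄_T)` : `C^{2,1}` regularity together with
vanishing on `∂Ω × [0,T] ∪ Ω̄ × {T}`. -/
def TestZero {N : ℕ} (Ω : Set (Euc N)) (T : ℝ) (ζ : Euc N → ℝ → ℝ) : Prop :=
  C21 ζ ∧ (∀ x ∈ frontier Ω, ∀ t ∈ Icc (0:ℝ) T, ζ x t = 0) ∧
  (∀ x ∈ closure Ω, ζ x T = 0)

/-- `g : ℝ → ℝ` continuous, nondecreasing and vanishing on `(-∞,0]`. -/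
def GoodG (g : ℝ → ℝ) : Prop := Continuous g ∧ Monotone g ∧ ∀ r : ℝ, r ≤ 0 → g r = 0

/-- `μ ∈ M¹₊(Ω)` : a positive Radon measure on `Ω` with `∫_Ω ρ dμ < ∞`. -/
def MemM1 {N : ℕ} (Ω : Set (Euc N)) (μ : Measure (Euc N)) : Prop :=
  μ Ωᶜ = 0 ∧ (∀ K : Set (Euc N), K ⊆ Ω → IsCompact K → μ K < ⊤) ∧
  (∫⁻ x, ENNReal.ofReal (rho Ω x) ∂μ) < ⊤

/-- A positive Radon measure on the (open) set `U`. -/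
def RadonOn {N : ℕ} (U : Set (Euc N)) (ν : Measure (Euc N)) : Prop :=
  ν Uᶜ = 0 ∧ ∀ K : Set (Euc N), K ⊆ U → IsCompact K → ν K < ⊤

/-- Weak solution of `(P_μ)` : `∂_t u - Δu + g(u) = 0` in `Q_T`, `u = 0` on
`∂Ω × (0,T)`, `u(·,0) = μ`. -/
def WeakSol {N : ℕ} (Ω : Set (Euc N)) (T : ℝ) (g : ℝ → ℝ) (μ : Measure (Euc N))
    (u : Euc N × ℝ → ℝ) : Prop :=
  IntegrableOn u (QT Ω T) ∧
  IntegrableOn (fun p => g (u p) * rho Ω p.1) (QT Ω T) ∧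
  ∀ ζ : Euc N → ℝ → ℝ, TestZero Ω T ζ →
    (∫ p in QT Ω T,
      (-(u p) * deriv (ζ p.1) p.2 - u p * lap (fun y => ζ y p.2) p.1 + ζ p.1 p.2 * g (u p)))
      = ∫ x, ζ x 0 ∂μ

/-- Weak subsolution of `(P_μ)`. -/
def WeakSubSol {N : ℕ} (Ω : Set (Euc N)) (T : ℝ) (g : ℝ → ℝ) (μ : Measure (Euc N))
    (u : Euc N × ℝ → ℝ) : Prop :=
  IntegrableOn u (QT Ω T) ∧
  IntegrableOn (fun p => g (u p) * rho Ω p.1) (QT Ω T) ∧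
  ∀ ζ : Euc N → ℝ → ℝ, TestZero Ω T ζ → (∀ x t, 0 ≤ ζ x t) →
    (∫ p in QT Ω T,
      (-(u p) * deriv (ζ p.1) p.2 - u p * lap (fun y => ζ y p.2) p.1 + ζ p.1 p.2 * g (u p)))
      ≤ ∫ x, ζ x 0 ∂μ

/-- `μ` is a good measure relative to `g` : `(P_μ)` admits a weak solution. -/
def GoodMeasure {N : ℕ} (Ω : Set (Euc N)) (T : ℝ) (g : ℝ → ℝ) (μ : Measure (Euc N)) : Prop :=
  ∃ u, WeakSol Ω T g μ u

/-- Essential limit of `F(t)` as `t → 0⁺` equals `L`. -/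
def EssLimInit (F : ℝ → ℝ) (L : ℝ) : Prop :=
  Tendsto F ((𝓝[>] (0:ℝ)) ⊓ (ae (volume : Measure ℝ))) (𝓝 L)

/-- Essential limit of `F(t)` as `t → 0⁺` is `+∞`. -/
def EssLimInitTop (F : ℝ → ℝ) : Prop :=
  Tendsto F ((𝓝[>] (0:ℝ)) ⊓ (ae (volume : Measure ℝ))) atTop

/-- `ν` is the initial trace of `u` on `U ⊆ Ω` : for every `φ ∈ C_c(U)`,
`ess lim_{t→0} ∫_Ω u(·,t) φ dx = ∫ φ dν`. -/
def InitTraceOn {N : ℕ} (Ω U : Set (Euc N)) (u : Euc N × ℝ → ℝ) (ν : Measure (Euc N)) : Prop :=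
  ∀ φ : Euc N → ℝ, Continuous φ → HasCompactSupport φ → tsupport φ ⊆ U →
    EssLimInit (fun t => ∫ x in Ω, u (x, t) * φ x) (∫ x, φ x ∂ν)

/-- `μstar` is the reduced measure of `μ` : the largest good measure `≤ μ`. -/
def IsReducedMeasure {N : ℕ} (Ω : Set (Euc N)) (T : ℝ) (g : ℝ → ℝ)
    (μ μstar : Measure (Euc N)) : Prop :=
  MemM1 Ω μstar ∧ μstar ≤ μ ∧ GoodMeasure Ω T g μstar ∧
  ∀ ν : Measure (Euc N), MemM1 Ω ν → GoodMeasure Ω T g ν → ν ≤ μ → ν ≤ μstar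

/-- The `N`-dimensional Hausdorff measure on `ℝ^N`. -/
def hausN {N : ℕ} : Measure (Euc N) := MeasureTheory.Measure.hausdorffMeasure (N : ℝ)

/-!
Pairing `u` with a test function `φ ≥ 0` supported in `Ω`, `F(t) = ∫_Ω u(·,t) φ` satisfies
`F' ≤ ∫_Ω u(·,t) Δφ` weakly, because the absorption term has the favourable sign. Subtracting a
primitive of the right-hand side, which is continuous and vanishes at `0`, leaves a function that
is nonincreasing off a null set, so `F` has an essential limit in `(-∞, +∞]` at `0`.

Let `R` be the set of points near which the masses of `u(·,t) dx` stay bounded as `t → 0`. Test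
functions supported in `R` have finite limits; the local mass bounds carry this over to `C_c(R)`,
and the limit is a positive functional, represented by a Radon measure `ν`. A test function that is
positive at a point of `S = Ω ∖ R` cannot have a finite limit, since by Markov's inequality it would
bound the mass near that point.
-/

open scoped ContDiff Convolution CompactlySupported

section ExtendedLimit

variable {ι : Type*} {l : Filter ι} {F G : ι → ℝ}

/-- `F` has a limit in `(-∞, +∞]` along `l`. -/
def HasExtendedLimit (l : Filter ι) (F : ι → ℝ) : Prop :=
  (∃ L, Tendsto F l (𝓝 L)) ∨ Tendsto F l atTop

theorem HasExtendedLimit.congr (hF : HasExtendedLimit l F) (hFG : F =ᶠ[l] G) :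
    HasExtendedLimit l G :=
  hF.imp (fun ⟨L, hL⟩ => ⟨L, hL.congr' hFG⟩) fun h => h.congr' hFG

theorem HasExtendedLimit.add_tendsto {c : ℝ} (hF : HasExtendedLimit l F)
    (hG : Tendsto G l (𝓝 c)) : HasExtendedLimit l fun t => F t + G t :=
  hF.imp (fun ⟨L, hL⟩ => ⟨L + c, hL.add hG⟩) fun h => h.atTop_add hG

theorem HasExtendedLimit.exists_tendsto [l.NeBot] (hF : HasExtendedLimit l F)
    (hbdd : l.IsBoundedUnder (· ≤ ·) F) : ∃ L, Tendsto F l (𝓝 L) :=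
  hF.resolve_right fun h => not_isBoundedUnder_of_tendsto_atTop h hbdd

theorem hasExtendedLimit_of_antitoneOn [Preorder ι] {s : Set ι} (hF : AntitoneOn F s)
    (hs : s ∈ l) (hl : ∀ x ∈ s, ∀ᶠ t in l, t ≤ x) : HasExtendedLimit l F := by
  have hcomap : comap ((↑) : s → ι) l ≤ atBot := tendsto_id'.1 <| tendsto_atBot.2 fun x =>
    tendsto_comap.eventually (hl x x.2)
  have hrange : range ((↑) : s → ι) ∈ l := by rwa [Subtype.range_coe]
  have hanti : Antitone (F ∘ ((↑) : s → ι)) := antitoneOn_iff_antitone.1 hF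
  rcases tendsto_atBot_of_antitone hanti with htop | ⟨L, hL⟩
  · exact .inr ((tendsto_comap'_iff hrange).1 (htop.mono_left hcomap))
  · exact .inl ⟨L, (tendsto_comap'_iff hrange).1 (hL.mono_left hcomap)⟩

theorem exists_tendsto_of_forall_eventually_dist_le [l.NeBot]
    (h : ∀ ε > 0, ∃ G : ι → ℝ, (∃ L, Tendsto G l (𝓝 L)) ∧ ∀ᶠ t in l, dist (F t) (G t) ≤ ε) :
    ∃ L, Tendsto F l (𝓝 L) := by
  rw [← cauchy_map_iff_exists_tendsto, Metric.cauchy_iff]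
  refine ⟨inferInstance, fun ε hε => ?_⟩
  obtain ⟨G, ⟨L, hL⟩, hFG⟩ := h (ε / 4) (by positivity)
  have hFL : ∀ᶠ t in l, dist (F t) L < ε / 2 := by
    filter_upwards [hFG, Metric.tendsto_nhds.1 hL (ε / 4) (by positivity)] with t h₁ h₂
    linarith [dist_triangle (F t) (G t) L]
  refine ⟨_, image_mem_map hFL, ?_⟩
  rintro _ ⟨s, hs, rfl⟩ _ ⟨t, ht, rfl⟩
  linarith [dist_triangle_right (F s) (F t) L, mem_ofPred_eq ▸ hs, mem_ofPred_eq ▸ ht]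

end ExtendedLimit

/-- Nonnegative smooth functions with compact support in `Ω`. -/
structure IsTestFunction {E : Type*} [NormedAddCommGroup E] [NormedSpace ℝ E] (Ω : Set E)
    (φ : E → ℝ) : Prop where
  contDiff : ContDiff ℝ ∞ φ
  hasCompactSupport : HasCompactSupport φ
  tsupport_subset : tsupport φ ⊆ Ω
  nonneg : ∀ x, 0 ≤ φ x

section TestFunction

variable {E : Type*} [NormedAddCommGroup E] [NormedSpace ℝ E] {Ω Ω' : Set E} {φ : E → ℝ}

theorem IsTestFunction.mono (hφ : IsTestFunction Ω φ) (h : Ω ⊆ Ω') : IsTestFunction Ω' φ :=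
  ⟨hφ.contDiff, hφ.hasCompactSupport, hφ.tsupport_subset.trans h, hφ.nonneg⟩

theorem IsTestFunction.continuous (hφ : IsTestFunction Ω φ) : Continuous φ :=
  hφ.contDiff.continuous

variable [FiniteDimensional ℝ E]

theorem IsTestFunction.normed_const_sub [MeasurableSpace E] [BorelSpace E]
    {μ : Measure E} [μ.IsAddHaarMeasure] (ρ : ContDiffBump (0 : E)) {x : E}
    (hx : Metric.closedBall x ρ.rOut ⊆ Ω) : IsTestFunction Ω fun y => ρ.normed μ (x - y) where
  contDiff := ρ.contDiff_normed.comp (contDiff_const.sub contDiff_id)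
  hasCompactSupport := ρ.hasCompactSupport_normed.comp_homeomorph (Homeomorph.subLeft x)
  tsupport_subset := by
    refine (closure_minimal (fun y hy => ?_) Metric.isClosed_closedBall).trans hx
    have hmem : x - y ∈ Function.support (ρ.normed μ) := hy
    rw [ρ.support_normed_eq, mem_ball_zero_iff] at hmem
    rw [mem_closedBall_iff_norm']
    exact hmem.le
  nonneg y := ρ.nonneg_normed _

theorem exists_isTestFunction_eqOn_one {K : Set E} (hK : IsCompact K) (hΩ : IsOpen Ω)
    (hKΩ : K ⊆ Ω) : ∃ ψ, IsTestFunction Ω ψ ∧ EqOn ψ 1 K := by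
  obtain ⟨L, hL, hKL, hLΩ⟩ := exists_compact_between hK hΩ hKΩ
  obtain ⟨ψ, hψ, hψ_range, hψ_supp, hψ_one⟩ := exists_contMDiff_support_eq_eq_one_iff
    (n := ⊤) (modelWithCornersSelf ℝ E) isOpen_interior hK.isClosed hKL
  have hψL : Function.support ψ ⊆ L := hψ_supp.trans_subset interior_subset
  exact ⟨ψ, ⟨hψ.contDiff, .of_support_subset_isCompact hL hψL,
    (closure_minimal hψL hL.isClosed).trans hLΩ, fun x => (hψ_range ⟨x, rfl⟩).1⟩,
    fun x hx => (hψ_one x).1 hx⟩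

theorem exists_isTestFunction_le (hφ : Continuous φ) (hφΩ : tsupport φ ⊆ Ω)
    (hφ₀ : ∀ x, 0 ≤ φ x) {x : E} (hx : 0 < φ x) :
    ∃ ψ, IsTestFunction Ω ψ ∧ 0 < ψ x ∧ ∀ y, ψ y ≤ φ y := by
  have hnhds : {y | φ x / 2 < φ y} ∈ 𝓝 x :=
    hφ.continuousAt.eventually_const_lt (half_lt_self hx)
  obtain ⟨b, hb_supp, hb_compact, hb, hb_range, hbx⟩ :=
    exists_contDiff_tsupport_subset (n := ⊤) hnhds
  have hb₀ (y : E) : 0 ≤ b y := (hb_range ⟨y, rfl⟩).1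
  have hb₁ (y : E) : b y ≤ 1 := (hb_range ⟨y, rfl⟩).2
  refine ⟨fun y => φ x / 2 * b y, ⟨contDiff_const.mul hb, hb_compact.mul_left, ?_,
    fun y => mul_nonneg (half_pos hx).le (hb₀ y)⟩, by simpa [hbx] using hx, fun y => ?_⟩
  · refine tsupport_mul_subset_right.trans fun y hy => hφΩ (subset_tsupport φ ?_)
    exact ((half_pos hx).trans (hb_supp hy)).ne'
  · by_cases hy : y ∈ tsupport b
    · exact (mul_le_of_le_one_right (half_pos hx).le (hb₁ y)).trans (hb_supp hy).le
    · simpa [image_eq_zero_of_notMem_tsupport hy] using hφ₀ y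

theorem exists_isTestFunction_sub_eq (hΩ : IsOpen Ω) (hφ : ContDiff ℝ ∞ φ)
    (hφc : HasCompactSupport φ) (hφΩ : tsupport φ ⊆ Ω) :
    ∃ ψ₁ ψ₂, IsTestFunction Ω ψ₁ ∧ IsTestFunction Ω ψ₂ ∧ φ = ψ₁ - ψ₂ := by
  obtain ⟨ψ, hψ, hψ_one⟩ := exists_isTestFunction_eqOn_one hφc.isCompact hΩ hφΩ
  obtain ⟨C, hC⟩ := hφc.exists_bound_of_continuous hφ.continuous
  have hC₀ : 0 ≤ C := (norm_nonneg _).trans (hC 0)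
  have hCψ : IsTestFunction Ω fun x => C * ψ x :=
    ⟨contDiff_const.mul hψ.contDiff, hψ.hasCompactSupport.mul_left,
      tsupport_mul_subset_right.trans hψ.tsupport_subset,
      fun x => mul_nonneg hC₀ (hψ.nonneg x)⟩
  refine ⟨φ + fun x => C * ψ x, fun x => C * ψ x, ⟨hφ.add hCψ.contDiff,
    hφc.add hCψ.hasCompactSupport, (tsupport_add φ _).trans
      (union_subset hφΩ hCψ.tsupport_subset), fun x => ?_⟩, hCψ, (add_sub_cancel_right _ _).symm⟩
  by_cases hx : x ∈ tsupport φ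
  · simpa [hψ_one hx] using neg_le_iff_add_nonneg.1 (neg_le_of_abs_le (hC x))
  · simpa [image_eq_zero_of_notMem_tsupport hx] using hCψ.nonneg x

end TestFunction

section Integral

theorem integrable_mul_of_hasCompactSupport {X : Type*} [TopologicalSpace X]
    [MeasurableSpace X] [OpensMeasurableSpace X] [SecondCountableTopology X]
    {μ : Measure X} {f ζ : X → ℝ} (hf : Integrable f μ) (hζ : Continuous ζ)
    (hζc : HasCompactSupport ζ) : Integrable (fun x => f x * ζ x) μ := by
  obtain ⟨C, hC⟩ := hζc.exists_bound_of_continuous hζ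
  exact hf.mul_bdd hζ.aestronglyMeasurable (.of_forall hC)

theorem integrable_integral_mul {X Y : Type*} [TopologicalSpace X] [SecondCountableTopology X]
    [MeasurableSpace X] [OpensMeasurableSpace X] [MeasurableSpace Y] {μ : Measure X}
    {ν : Measure Y} [SFinite μ] [SFinite ν] {u : X × Y → ℝ} (hu : Integrable u (μ.prod ν))
    {φ : X → ℝ} (hφ : Continuous φ) (hφc : HasCompactSupport φ) :
    Integrable (fun y => ∫ x, u (x, y) * φ x ∂μ) ν := by
  obtain ⟨C, hC⟩ := hφc.exists_bound_of_continuous hφ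
  exact (hu.mul_bdd (g := fun p => φ p.1) hφ.aestronglyMeasurable.comp_fst
    (.of_forall fun p => hC p.1)).integral_prod_right

theorem norm_integral_le_mul_of_support_subset {X : Type*} [MeasurableSpace X]
    {μ : Measure X} {K : Set X} {M : ℝ≥0}
    (hM : μ K ≤ M) {f : X → ℝ} (hf : Function.support f ⊆ K) {C : ℝ} (hC₀ : 0 ≤ C)
    (hC : ∀ x, ‖f x‖ ≤ C) : ‖∫ x, f x ∂μ‖ ≤ C * M := by
  rw [← setIntegral_eq_integral_of_forall_compl_eq_zero fun x hx => by_contra fun h => hx (hf h)]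
  refine (norm_setIntegral_le_of_norm_le_const (hM.trans_lt ENNReal.coe_lt_top)
    fun x _ => hC x).trans ?_
  gcongr
  exact ENNReal.toReal_mono ENNReal.coe_ne_top hM

end Integral

section WeakDerivative

variable {a b : ℝ} {F G H : ℝ → ℝ}

/-- The inequality `F' ≤ H` in the sense of distributions on `I`. -/
def WeakDerivLE (F H : ℝ → ℝ) (I : Set ℝ) : Prop :=
  ∀ η, IsTestFunction I η → 0 ≤ ∫ t in I, (F t * deriv η t + H t * η t)

theorem WeakDerivLE.antitoneOn_convolution (hG : IntegrableOn G (Ioo a b))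
    (h : WeakDerivLE G 0 (Ioo a b)) (ρ : ContDiffBump (0 : ℝ)) {s t : ℝ}
    (hs : a < s - ρ.rOut) (ht : t + ρ.rOut < b) :
    AntitoneOn (ρ.normed volume ⋆[ContinuousLinearMap.lsmul ℝ ℝ, volume]
      (Ioo a b).indicator G) (Icc s t) := by
  have hGi : Integrable ((Ioo a b).indicator G) :=
    (integrable_indicator_iff measurableSet_Ioo).2 hG
  have hderiv := ρ.hasCompactSupport_normed (μ := volume).hasDerivAt_convolution_left
    (ContinuousLinearMap.lsmul ℝ ℝ) (ρ.contDiff_normed (n := 1)) hGi.locallyIntegrable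
  refine antitoneOn_of_deriv_nonpos (convex_Icc _ _)
    (fun x _ => (hderiv x).continuousAt.continuousWithinAt)
    (fun x _ => (hderiv x).differentiableAt.differentiableWithinAt) fun x hx => ?_
  rw [interior_Icc] at hx
  have hball : Metric.closedBall x ρ.rOut ⊆ Ioo a b := by
    rw [Real.closedBall_eq_Icc]
    exact Icc_subset_Ioo (by linarith [hx.1]) (by linarith [hx.2])
  have htest := h _ (.normed_const_sub (μ := volume) ρ hball)
  have hderiv_sub (r : ℝ) :
      deriv (fun r => ρ.normed volume (x - r)) r = -deriv (ρ.normed volume) (x - r) :=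
    deriv_comp_const_sub ..
  rw [(hderiv x).deriv, convolution_eq_swap, ← neg_nonneg, ← integral_neg]
  convert htest using 1
  rw [← integral_indicator measurableSet_Ioo]
  refine integral_congr_ae (.of_forall fun r => ?_)
  by_cases hr : r ∈ Ioo a b <;> simp [hr, hderiv_sub, mul_comm]

theorem WeakDerivLE.exists_mem_ae_antitoneOn (hG : IntegrableOn G (Ioo a b))
    (h : WeakDerivLE G 0 (Ioo a b)) :
    ∃ A ∈ ae (volume : Measure ℝ), AntitoneOn G (A ∩ Ioo a b) := by
  have hGi : Integrable ((Ioo a b).indicator G) :=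
    (integrable_indicator_iff measurableSet_Ioo).2 hG
  obtain ⟨ε, -, hε_pos, hε_lim⟩ := exists_seq_strictAnti_tendsto (0 : ℝ)
  let ρ (n : ℕ) : ContDiffBump (0 : ℝ) :=
    ⟨ε n / 2, ε n, half_pos (hε_pos n), half_lt_self (hε_pos n)⟩
  have hmollify := ContDiffBump.ae_convolution_tendsto_right_of_locallyIntegrable (φ := ρ)
    (K := 2) hε_lim (.of_forall fun n => (mul_div_cancel₀ (ε n) two_ne_zero).ge)
    hGi.locallyIntegrable
  refine ⟨_, hmollify, ?_⟩
  rintro s ⟨hs, hsI⟩ t ⟨ht, htI⟩ hst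
  rw [mem_ofPred_eq, indicator_of_mem hsI] at hs
  rw [mem_ofPred_eq, indicator_of_mem htI] at ht
  refine le_of_tendsto_of_tendsto ht hs ?_
  filter_upwards [hε_lim.eventually_lt_const (sub_pos.2 hsI.1),
    hε_lim.eventually_lt_const (sub_pos.2 htI.2)] with n hns hnt
  exact h.antitoneOn_convolution hG (ρ n) (by change a < s - ε n; linarith)
    (by change t + ε n < b; linarith) (left_mem_Icc.2 hst) (right_mem_Icc.2 hst) hst

theorem integral_primitive_mul_deriv (hab : a ≤ b) (hH : IntegrableOn H (Ioo a b))
    {η : ℝ → ℝ} (hη : ContDiff ℝ 1 η) (ha : η a = 0) (hb : η b = 0) :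
    ∫ t in Ioo a b, (∫ r in a..t, H r) * deriv η t = -∫ t in Ioo a b, H t * η t := by
  have hHi : IntervalIntegrable H volume a b :=
    (intervalIntegrable_iff_integrableOn_Ioo_of_le hab).2 hH
  have hparts := (hHi.absolutelyContinuousOnInterval_intervalIntegral left_mem_uIcc)
    |>.integral_mul_deriv_eq_deriv_mul hη.contDiffOn.absolutelyContinuousOnInterval
  simp only [ha, hb, mul_zero, sub_zero, zero_sub, intervalIntegral.integral_of_le hab,
    integral_Ioc_eq_integral_Ioo] at hparts
  rw [hparts, neg_inj]
  refine setIntegral_congr_ae measurableSet_Ioo ?_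
  filter_upwards [hHi.ae_hasDerivAt_integral] with t ht htI
  rw [(ht (Icc_subset_uIcc (Ioo_subset_Icc_self htI)) a left_mem_uIcc).deriv]

theorem continuousOn_primitive_Icc (hab : a ≤ b) (hH : IntegrableOn H (Ioo a b)) :
    ContinuousOn (fun t => ∫ r in a..t, H r) (Icc a b) := by
  have := intervalIntegral.continuousOn_primitive_interval (a := a) (b := b) (f := H)
    (μ := volume)
  rw [uIcc_of_le hab, integrableOn_Icc_iff_integrableOn_Ioo] at this
  exact this hH

theorem WeakDerivLE.sub_primitive (hab : a ≤ b) (hF : IntegrableOn F (Ioo a b))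
    (hH : IntegrableOn H (Ioo a b)) (h : WeakDerivLE F H (Ioo a b)) :
    WeakDerivLE (fun t => F t - ∫ r in a..t, H r) 0 (Ioo a b) := by
  intro η hη
  have hη_deriv : Continuous (deriv η) := hη.contDiff.continuous_deriv (by simp)
  have hη_out {t : ℝ} (ht : t ∉ Ioo a b) : η t = 0 :=
    image_eq_zero_of_notMem_tsupport fun h => ht (hη.tsupport_subset h)
  have hP : IntegrableOn (fun t => ∫ r in a..t, H r) (Ioo a b) :=
    (continuousOn_primitive_Icc hab hH).integrableOn_Icc.mono_set Ioo_subset_Icc_self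
  have hFη := integrable_mul_of_hasCompactSupport hF hη_deriv hη.hasCompactSupport.deriv
  have hPη := integrable_mul_of_hasCompactSupport hP hη_deriv hη.hasCompactSupport.deriv
  have hHη := integrable_mul_of_hasCompactSupport hH hη.continuous hη.hasCompactSupport
  calc 0 ≤ ∫ t in Ioo a b, (F t * deriv η t + H t * η t) := h η hη
    _ = (∫ t in Ioo a b, F t * deriv η t)
        - ∫ t in Ioo a b, (∫ r in a..t, H r) * deriv η t := by
      rw [integral_add hFη hHη, integral_primitive_mul_deriv hab hH (hη.contDiff.of_le (by simp))
        (hη_out left_notMem_Ioo) (hη_out right_notMem_Ioo), sub_neg_eq_add]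
    _ = _ := by
      rw [← integral_sub hFη hPη]
      simp only [sub_mul, Pi.zero_apply, zero_mul, add_zero]

/-- The filter of essential limits from the right at `a`. -/
abbrev essNhdsGT (a : ℝ) : Filter ℝ := 𝓝[>] a ⊓ ae volume

instance essNhdsGT_neBot (a : ℝ) : (essNhdsGT a).NeBot := by
  rw [inf_neBot_iff]
  intro s hs A hA
  obtain ⟨b, hb, hsub⟩ := mem_nhdsGT_iff_exists_Ioo_subset.1 hs
  obtain ⟨t, ht, htA⟩ :=
    (Measure.dense_of_ae hA).inter_open_nonempty _ isOpen_Ioo (nonempty_Ioo.2 hb)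
  exact ⟨t, hsub ht, htA⟩

theorem WeakDerivLE.hasExtendedLimit (hab : a < b) (hF : IntegrableOn F (Ioo a b))
    (hH : IntegrableOn H (Ioo a b)) (h : WeakDerivLE F H (Ioo a b)) :
    HasExtendedLimit (essNhdsGT a) F := by
  set P : ℝ → ℝ := fun t => ∫ r in a..t, H r
  have hP : ContinuousOn P (Icc a b) := continuousOn_primitive_Icc hab.le hH
  have hP_lim : Tendsto P (essNhdsGT a) (𝓝 0) := by
    have hPa : Tendsto P (𝓝[Icc a b] a) (𝓝 0) := by
      simpa [P, ContinuousWithinAt] using hP a (left_mem_Icc.2 hab.le)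
    refine hPa.mono_left (inf_le_left.trans ?_)
    rw [← nhdsWithin_Ioc_eq_nhdsGT hab]
    exact nhdsWithin_mono _ Ioc_subset_Icc_self
  obtain ⟨A, hA, hanti⟩ := (h.sub_primitive hab.le hF hH).exists_mem_ae_antitoneOn
    (hF.sub (hP.integrableOn_Icc.mono_set Ioo_subset_Icc_self))
  have hFP : HasExtendedLimit (essNhdsGT a) fun t => F t - P t :=
    hasExtendedLimit_of_antitoneOn hanti
      (inter_mem (mem_inf_of_right hA) (mem_inf_of_left (Ioo_mem_nhdsGT hab)))
      fun s hs => mem_inf_of_left (mem_of_superset (Ioc_mem_nhdsGT hs.2.1) fun t ht => ht.2)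
  exact (hFP.add_tendsto hP_lim).congr (.of_forall fun t => sub_add_cancel _ _)

end WeakDerivative

section RegularSet

variable {X ι : Type*} [TopologicalSpace X] [MeasurableSpace X] {l : Filter ι}
  {μ : ι → Measure X}

/-- The points having a neighbourhood whose mass under `μ t` stays bounded along `l`. -/
def regularSet (l : Filter ι) (μ : ι → Measure X) : Set X :=
  {x | ∃ U ∈ 𝓝 x, ∃ M : ℝ≥0, ∀ᶠ t in l, μ t U ≤ M}

theorem isOpen_regularSet : IsOpen (regularSet l μ) := by
  rw [isOpen_iff_eventually]
  rintro x ⟨U, hU, hM⟩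
  filter_upwards [eventually_mem_nhds_iff.2 hU] with y hy using ⟨U, hy, hM⟩

theorem exists_eventually_measure_le_of_isCompact {K : Set X} (hK : IsCompact K)
    (hKR : K ⊆ regularSet l μ) : ∃ M : ℝ≥0, ∀ᶠ t in l, μ t K ≤ M := by
  refine hK.induction_on (p := fun s => ∃ M : ℝ≥0, ∀ᶠ t in l, μ t s ≤ M) ⟨0, by simp⟩
    (fun s t hst ⟨M, hM⟩ => ⟨M, hM.mono fun _ h => (measure_mono hst).trans h⟩) ?_ ?_
  · rintro s t ⟨M, hM⟩ ⟨M', hM'⟩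
    refine ⟨M + M', ?_⟩
    filter_upwards [hM, hM'] with i h h'
    exact (measure_union_le s t).trans (by push_cast; gcongr)
  · intro x hx
    obtain ⟨U, hU, hM⟩ := hKR hx
    exact ⟨U, mem_nhdsWithin_of_mem_nhds hU, hM⟩

theorem mem_regularSet_of_isBoundedUnder_integral [OpensMeasurableSpace X]
    (hfin : ∀ᶠ t in l, IsFiniteMeasureOnCompacts (μ t)) {φ : X → ℝ} (hφ : Continuous φ)
    (hφc : HasCompactSupport φ) (hφ₀ : ∀ x, 0 ≤ φ x) {x : X} (hx : 0 < φ x)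
    (hbdd : l.IsBoundedUnder (· ≤ ·) fun t => ∫ y, φ y ∂μ t) : x ∈ regularSet l μ := by
  obtain ⟨B, hB⟩ := hbdd
  refine ⟨{y | φ x / 2 ≤ φ y}, mem_of_superset
    (hφ.continuousAt.eventually_const_lt (half_lt_self hx)) fun _ => le_of_lt (a := φ x / 2),
    (B / (φ x / 2)).toNNReal, ?_⟩
  filter_upwards [hfin, eventually_map.1 hB] with t _ ht
  have hφi : Integrable φ (μ t) := hφ.integrable_of_hasCompactSupport hφc
  have hfinite : μ t {y | φ x / 2 ≤ φ y} ≠ ⊤ := (hφi.measure_ge_lt_top (half_pos hx)).ne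
  have hmarkov := mul_meas_ge_le_integral_of_nonneg (.of_forall hφ₀) hφi (φ x / 2)
  rw [← ENNReal.ofReal_toReal hfinite, ← ENNReal.ofReal]
  exact ENNReal.ofReal_le_ofReal ((le_div_iff₀' (half_pos hx)).2 (hmarkov.trans ht))

end RegularSet

section InitialTrace

variable {E ι : Type*} [NormedAddCommGroup E] [NormedSpace ℝ E] [MeasurableSpace E]
  {l : Filter ι} {μ : ι → Measure E} {Ω : Set E} {φ : E → ℝ}

theorem exists_tendsto_integral_of_isTestFunction [l.NeBot]
    (hlim : ∀ φ, IsTestFunction Ω φ → HasExtendedLimit l fun t => ∫ x, φ x ∂μ t)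
    (hφ : IsTestFunction (Ω ∩ regularSet l μ) φ) :
    ∃ L, Tendsto (fun t => ∫ x, φ x ∂μ t) l (𝓝 L) := by
  obtain ⟨M, hM⟩ := exists_eventually_measure_le_of_isCompact hφ.hasCompactSupport
    (hφ.tsupport_subset.trans inter_subset_right)
  obtain ⟨C, hC⟩ := hφ.hasCompactSupport.exists_bound_of_continuous hφ.continuous
  refine (hlim φ (hφ.mono inter_subset_left)).exists_tendsto
    (isBoundedUnder_of_eventually_le (a := C * M) ?_)
  filter_upwards [hM] with t ht
  exact (le_abs_self _).trans <| norm_integral_le_mul_of_support_subset ht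
    (subset_tsupport φ) ((norm_nonneg _).trans (hC 0)) hC

variable [BorelSpace E] [FiniteDimensional ℝ E]

theorem exists_tendsto_integral_of_contDiff [l.NeBot]
    (hfin : ∀ᶠ t in l, IsFiniteMeasureOnCompacts (μ t)) (hΩ : IsOpen Ω)
    (hlim : ∀ φ, IsTestFunction Ω φ → HasExtendedLimit l fun t => ∫ x, φ x ∂μ t)
    (hφ : ContDiff ℝ ∞ φ) (hφc : HasCompactSupport φ)
    (hφR : tsupport φ ⊆ Ω ∩ regularSet l μ) :
    ∃ L, Tendsto (fun t => ∫ x, φ x ∂μ t) l (𝓝 L) := by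
  obtain ⟨ψ₁, ψ₂, hψ₁, hψ₂, rfl⟩ :=
    exists_isTestFunction_sub_eq (hΩ.inter isOpen_regularSet) hφ hφc hφR
  obtain ⟨L₁, hL₁⟩ := exists_tendsto_integral_of_isTestFunction hlim hψ₁
  obtain ⟨L₂, hL₂⟩ := exists_tendsto_integral_of_isTestFunction hlim hψ₂
  refine ⟨L₁ - L₂, (hL₁.sub hL₂).congr' ?_⟩
  filter_upwards [hfin] with t _
  exact (integral_sub (hψ₁.continuous.integrable_of_hasCompactSupport hψ₁.hasCompactSupport)
    (hψ₂.continuous.integrable_of_hasCompactSupport hψ₂.hasCompactSupport)).symm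

theorem exists_tendsto_integral_of_tsupport_subset [l.NeBot]
    (hfin : ∀ᶠ t in l, IsFiniteMeasureOnCompacts (μ t)) (hΩ : IsOpen Ω)
    (hlim : ∀ φ, IsTestFunction Ω φ → HasExtendedLimit l fun t => ∫ x, φ x ∂μ t)
    (hφ : Continuous φ) (hφc : HasCompactSupport φ) (hφR : tsupport φ ⊆ Ω ∩ regularSet l μ) :
    ∃ L, Tendsto (fun t => ∫ x, φ x ∂μ t) l (𝓝 L) := by
  obtain ⟨M, hM⟩ :=
    exists_eventually_measure_le_of_isCompact hφc (hφR.trans inter_subset_right)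
  refine exists_tendsto_of_forall_eventually_dist_le fun ε hε => ?_
  have hδ : 0 < ε / (M + 1) := by positivity
  obtain ⟨f, hf, hfφ, hf_supp⟩ :=
    hφ.exists_contDiff_approx ⊤ (ε := fun _ => ε / (M + 1)) continuous_const fun _ => hδ
  have hfc : HasCompactSupport f := hφc.mono hf_supp
  refine ⟨_, exists_tendsto_integral_of_contDiff hfin hΩ hlim hf hfc
    ((closure_mono hf_supp).trans hφR), ?_⟩
  filter_upwards [hfin, hM] with t _ ht
  rw [dist_eq_norm, ← integral_sub (hφ.integrable_of_hasCompactSupport hφc)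
    (hf.continuous.integrable_of_hasCompactSupport hfc)]
  calc ‖∫ x, (φ x - f x) ∂μ t‖ ≤ ε / (M + 1) * M := by
        refine norm_integral_le_mul_of_support_subset ht ?_ hδ.le fun x => ?_
        · exact (Function.support_sub φ f).trans
            (union_subset (subset_tsupport φ) (hf_supp.trans (subset_tsupport φ)))
        · rw [← dist_eq_norm, dist_comm]
          exact (hfφ x).le
    _ ≤ ε := by
        rw [div_mul_eq_mul_div, div_le_iff₀ (by positivity)]
        gcongr
        simp

theorem tendsto_integral_atTop_of_notMem_regularSet
    (hfin : ∀ᶠ t in l, IsFiniteMeasureOnCompacts (μ t))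
    (hlim : ∀ φ, IsTestFunction Ω φ → HasExtendedLimit l fun t => ∫ x, φ x ∂μ t)
    (hφ : Continuous φ) (hφc : HasCompactSupport φ) (hφΩ : tsupport φ ⊆ Ω)
    (hφ₀ : ∀ x, 0 ≤ φ x) {x : E} (hx : x ∉ regularSet l μ) (hφx : 0 < φ x) :
    Tendsto (fun t => ∫ x, φ x ∂μ t) l atTop := by
  obtain ⟨ψ, hψ, hψx, hψφ⟩ := exists_isTestFunction_le hφ hφΩ hφ₀ hφx
  rcases hlim ψ hψ with ⟨L, hL⟩ | htop
  · exact absurd (mem_regularSet_of_isBoundedUnder_integral hfin hψ.continuous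
      hψ.hasCompactSupport hψ.nonneg hψx hL.isBoundedUnder_le) hx
  · refine tendsto_atTop_mono' _ ?_ htop
    filter_upwards [hfin] with t _
    exact integral_mono (hψ.continuous.integrable_of_hasCompactSupport hψ.hasCompactSupport)
      (hφ.integrable_of_hasCompactSupport hφc) hψφ

end InitialTrace

section Riesz

variable {X ι : Type*} [TopologicalSpace X]

theorem exists_extension_of_isOpen [T2Space X] {R : Set X} (hR : IsOpen R) (f : C_c(R, ℝ)) :
    ∃ φ : X → ℝ, Continuous φ ∧ HasCompactSupport φ ∧ tsupport φ ⊆ R ∧ ∀ x : R, φ x = f x :=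
  ⟨Function.extend (↑) f 0,
    HasCompactSupport.continuous_extend_zero hR f.continuous f.hasCompactSupport,
    f.hasCompactSupport.extend_zero continuous_subtype_val,
    (f.hasCompactSupport.tsupport_extend_zero_subset continuous_subtype_val).trans
      (Subtype.coe_image_subset _ _),
    Subtype.val_injective.extend_apply _ _⟩

variable [MeasurableSpace X] [BorelSpace X]

theorem integral_comap_subtype_of_tsupport_subset {R : Set X} (hR : IsOpen R) {φ : X → ℝ}
    (hφ : tsupport φ ⊆ R) (ν : Measure X) : ∫ x : R, φ x ∂ν.comap (↑) = ∫ x, φ x ∂ν := by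
  rw [integral_subtype_comap hR.measurableSet φ,
    setIntegral_eq_integral_of_forall_compl_eq_zero fun x hx =>
      image_eq_zero_of_notMem_tsupport fun h => hx (hφ h)]

variable [T2Space X] [LocallyCompactSpace X] {l : Filter ι} [l.NeBot] {μ : ι → Measure X}

theorem exists_measure_forall_tendsto_integral
    (hfin : ∀ᶠ t in l, IsFiniteMeasureOnCompacts (μ t))
    (hlim : ∀ f : C_c(X, ℝ), ∃ L, Tendsto (fun t => ∫ x, f x ∂μ t) l (𝓝 L)) :
    ∃ ν : Measure X, IsFiniteMeasureOnCompacts ν ∧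
      ∀ f : C_c(X, ℝ), Tendsto (fun t => ∫ x, f x ∂μ t) l (𝓝 (∫ x, f x ∂ν)) := by
  choose L hL using hlim
  let Λ₀ : C_c(X, ℝ) →ₗ[ℝ] ℝ :=
    { toFun := L
      map_add' f₁ f₂ := by
        refine tendsto_nhds_unique (hL _) (((hL f₁).add (hL f₂)).congr' ?_)
        filter_upwards [hfin] with t _
        exact (integral_add (f₁.continuous.integrable_of_hasCompactSupport f₁.hasCompactSupport)
          (f₂.continuous.integrable_of_hasCompactSupport f₂.hasCompactSupport)).symm
      map_smul' c f := tendsto_nhds_unique (hL _)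
        (((hL f).const_mul c).congr fun t => (integral_const_mul c f).symm) }
  let Λ : C_c(X, ℝ) →ₚ[ℝ] ℝ := PositiveLinearMap.mk₀ Λ₀ fun f hf =>
    ge_of_tendsto' (hL f) fun t => integral_nonneg hf
  refine ⟨RealRMK.rieszMeasure Λ, inferInstance, fun f => ?_⟩
  rw [RealRMK.integral_rieszMeasure]
  exact hL f

theorem exists_measure_forall_tendsto_integral_of_isOpen {R : Set X} (hR : IsOpen R)
    (hfin : ∀ᶠ t in l, IsFiniteMeasureOnCompacts (μ t))
    (hlim : ∀ φ : X → ℝ, Continuous φ → HasCompactSupport φ → tsupport φ ⊆ R →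
      ∃ L, Tendsto (fun t => ∫ x, φ x ∂μ t) l (𝓝 L)) :
    ∃ ν : Measure X, ν Rᶜ = 0 ∧ (∀ K ⊆ R, IsCompact K → ν K < ⊤) ∧
      ∀ φ : X → ℝ, Continuous φ → HasCompactSupport φ → tsupport φ ⊆ R →
        Tendsto (fun t => ∫ x, φ x ∂μ t) l (𝓝 (∫ x, φ x ∂ν)) := by
  have : LocallyCompactSpace R := hR.locallyCompactSpace
  have hemb : MeasurableEmbedding ((↑) : R → X) := .subtype_coe hR.measurableSet
  have hcompact {K : Set X} (hK : IsCompact K) (hKR : K ⊆ R) :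
      IsCompact ((↑) ⁻¹' K : Set R) :=
    Topology.IsInducing.subtypeVal.isCompact_preimage' hK (by simpa using hKR)
  have hcomap_fin : ∀ᶠ t in l, IsFiniteMeasureOnCompacts ((μ t).comap ((↑) : R → X)) :=
    hfin.mono fun t _ => .comap' (μ t) continuous_subtype_val hemb
  obtain ⟨ν, hν, hν_lim⟩ := exists_measure_forall_tendsto_integral hcomap_fin fun f => by
    obtain ⟨φ, hφ, hφc, hφR, hφf⟩ := exists_extension_of_isOpen hR f
    simpa only [← integral_comap_subtype_of_tsupport_subset hR hφR, hφf] using hlim φ hφ hφc hφR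
  refine ⟨ν.map (↑), by simp [hemb.map_apply], fun K hKR hK => ?_, fun φ hφ hφc hφR => ?_⟩
  · rw [hemb.map_apply]
    exact (hcompact hK hKR).measure_lt_top
  · rw [hemb.integral_map]
    refine (hν_lim ⟨⟨fun x => φ x, by fun_prop⟩, ?_⟩).congr fun t =>
      integral_comap_subtype_of_tsupport_subset hR hφR (μ t)
    exact .of_support_subset_isCompact (hcompact hφc hφR) fun x hx => subset_tsupport φ hx

end Riesz

section Laplacian

variable {N : ℕ} {f φ : Euc N → ℝ} {ζ : Euc N → ℝ → ℝ} {η : ℝ → ℝ}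

theorem lap_eq_sum_fderiv_fderiv {x : Euc N} (hf : DifferentiableAt ℝ (fderiv ℝ f) x) :
    lap f x = ∑ i, fderiv ℝ (fderiv ℝ f) x (EuclideanSpace.single i 1)
      (EuclideanSpace.single i 1) := by
  refine Finset.sum_congr rfl fun i _ => ?_
  rw [fderiv_clm_apply hf (differentiableAt_const _)]
  simp

theorem continuous_lap (hf : ContDiff ℝ 2 f) : Continuous (lap f) := by
  have hf' : ContDiff ℝ 1 (fderiv ℝ f) := hf.fderiv_right (by norm_num)
  have hlap (x : Euc N) := lap_eq_sum_fderiv_fderiv (hf'.differentiable one_ne_zero x)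
  refine Continuous.congr ?_ fun x => (hlap x).symm
  fun_prop

theorem lap_eq_zero_of_eventuallyEq {x : Euc N} (hf : f =ᶠ[𝓝 x] 0) : lap f x = 0 := by
  refine Finset.sum_eq_zero fun i _ => ?_
  have hzero : (fun y => fderiv ℝ f y (EuclideanSpace.single i 1)) =ᶠ[𝓝 x] 0 :=
    (hf.fderiv (𝕜 := ℝ)).mono fun y hy => by simp [hy]
  simp [hzero.fderiv_eq]

theorem lap_const_smul (c : ℝ) (f : Euc N → ℝ) (x : Euc N) : lap (c • f) x = c * lap f x := by
  simp only [lap, fderiv_const_smul_field, Finset.mul_sum]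
  refine Finset.sum_congr rfl fun i _ => ?_
  set e : Euc N := EuclideanSpace.single i 1
  have houter : fderiv ℝ (c • fun y => fderiv ℝ f y e) = c • fderiv ℝ fun y => fderiv ℝ f y e :=
    fderiv_const_smul_field c
  exact DFunLike.congr_fun (congrFun houter x) e

theorem hasCompactSupport_lap (hf : HasCompactSupport f) : HasCompactSupport (lap f) :=
  hf.mono' fun _ hx => by_contra fun h =>
    hx (lap_eq_zero_of_eventuallyEq (notMem_tsupport_iff_eventuallyEq.1 h))

theorem C21.continuous_heatAdj (hζ : C21 ζ) : Continuous (heatAdj ζ) := by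
  obtain ⟨-, -, hζt, -, -, hζx, hζxx⟩ := hζ
  have hlap (p : Euc N × ℝ) := lap_eq_sum_fderiv_fderiv (hζx p.2 p.1)
  refine Continuous.congr ?_ fun p => congrArg (deriv (ζ p.1) p.2 + ·) (hlap p).symm
  fun_prop

theorem hasCompactSupport_heatAdj (hζ : HasCompactSupport fun p : Euc N × ℝ => ζ p.1 p.2) :
    HasCompactSupport (heatAdj ζ) := by
  refine hζ.mono' fun p hp => by_contra fun h => hp ?_
  have hzero : ∀ᶠ q in 𝓝 p.1 ×ˢ 𝓝 p.2, ζ q.1 q.2 = 0 := by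
    rw [← nhds_prod_eq]
    exact notMem_tsupport_iff_eventuallyEq.1 h
  have ht : ζ p.1 =ᶠ[𝓝 p.2] 0 := hzero.curry.self_of_nhds
  have hx : (fun y => ζ y p.2) =ᶠ[𝓝 p.1] 0 := hzero.curry.mono fun y hy => hy.self_of_nhds
  simp [heatAdj, ht.deriv_eq, lap_eq_zero_of_eventuallyEq hx]

theorem c21_mul (hη : ContDiff ℝ 1 η) (hφ : ContDiff ℝ 2 φ) : C21 fun x t => η t * φ x := by
  have hφ' : ContDiff ℝ 1 (fderiv ℝ φ) := hφ.fderiv_right (by norm_num)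
  have hη_cont := hη.continuous
  have hη_diff := hη.differentiable one_ne_zero
  have hφ_cont := hφ.continuous
  have hφ_diff := hφ.differentiable two_ne_zero
  have hφ'_cont := hφ'.continuous
  have hφ'_diff := hφ'.differentiable one_ne_zero
  have hfderiv (t : ℝ) (x : Euc N) : fderiv ℝ (fun y => η t * φ y) x = η t • fderiv ℝ φ x :=
    fderiv_const_mul (hφ_diff x) _
  have hfderiv₂ (t : ℝ) (x : Euc N) :
      fderiv ℝ (fun y => η t • fderiv ℝ φ y) x = η t • fderiv ℝ (fderiv ℝ φ) x :=
    fderiv_fun_const_smul (hφ'_diff x) _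
  simp only [C21, hfderiv, hfderiv₂, deriv_mul_const_field]
  refine ⟨?_, ?_, ?_, ?_, ?_, ?_, ?_⟩ <;> fun_prop

theorem heatAdj_mul (η : ℝ → ℝ) (φ : Euc N → ℝ) (p : Euc N × ℝ) :
    heatAdj (fun x t => η t * φ x) p = φ p.1 * deriv η p.2 + lap φ p.1 * η p.2 := by
  simp only [heatAdj, deriv_mul_const_field]
  rw [mul_comm (lap φ p.1), ← lap_const_smul, mul_comm (deriv η p.2)]
  rfl

end Laplacian

section Cylinder

variable {N : ℕ} {Ω : Set (Euc N)} {T : ℝ} {u : Euc N × ℝ → ℝ}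

/-- `∂_t u - Δu ≤ 0` in `Ω × (0,T)` in the sense of distributions. -/
def IsHeatSubsolution (Ω : Set (Euc N)) (T : ℝ) (u : Euc N × ℝ → ℝ) : Prop :=
  ∀ ζ : Euc N → ℝ → ℝ, C21 ζ → HasCompactSupport (fun p : Euc N × ℝ => ζ p.1 p.2) →
    tsupport (fun p : Euc N × ℝ => ζ p.1 p.2) ⊆ QT Ω T → (∀ x t, 0 ≤ ζ x t) →
      0 ≤ ∫ p in QT Ω T, u p * heatAdj ζ p

theorem isHeatSubsolution_of_absorption {g : ℝ → ℝ} (hg : ∀ r, 0 ≤ g r)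
    (hu : IntegrableOn u (QT Ω T)) (hgu : IntegrableOn (fun p => g (u p)) (QT Ω T))
    (hsub : ∀ ζ : Euc N → ℝ → ℝ, C21 ζ → HasCompactSupport (fun p : Euc N × ℝ => ζ p.1 p.2) →
      tsupport (fun p : Euc N × ℝ => ζ p.1 p.2) ⊆ QT Ω T → (∀ x t, 0 ≤ ζ x t) →
        (∫ p in QT Ω T, (-(u p) * deriv (ζ p.1) p.2 - u p * lap (fun y => ζ y p.2) p.1
          + ζ p.1 p.2 * g (u p))) ≤ 0) :
    IsHeatSubsolution Ω T u := by
  intro ζ hζ hζc hζQ hζ₀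
  have hheat : IntegrableOn (fun p => u p * heatAdj ζ p) (QT Ω T) :=
    integrable_mul_of_hasCompactSupport hu hζ.continuous_heatAdj (hasCompactSupport_heatAdj hζc)
  have habs : IntegrableOn (fun p => g (u p) * ζ p.1 p.2) (QT Ω T) :=
    integrable_mul_of_hasCompactSupport hgu hζ.1 hζc
  have habs_nonneg : 0 ≤ ∫ p in QT Ω T, g (u p) * ζ p.1 p.2 :=
    integral_nonneg fun p => mul_nonneg (hg _) (hζ₀ _ _)
  have hsplit : ∫ p in QT Ω T, (-(u p) * deriv (ζ p.1) p.2 - u p * lap (fun y => ζ y p.2) p.1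
      + ζ p.1 p.2 * g (u p))
      = (∫ p in QT Ω T, g (u p) * ζ p.1 p.2) - ∫ p in QT Ω T, u p * heatAdj ζ p := by
    rw [← integral_sub habs hheat]
    congr 1 with p
    rw [heatAdj]
    ring
  linarith [hsub ζ hζ hζc hζQ hζ₀]

theorem volume_restrict_QT : (volume : Measure (Euc N × ℝ)).restrict (QT Ω T)
    = ((volume : Measure (Euc N)).restrict Ω).prod ((volume : Measure ℝ).restrict (Ioo 0 T)) := by
  rw [Measure.prod_restrict]
  rfl

theorem IsHeatSubsolution.weakDerivLE (hu : IntegrableOn u (QT Ω T))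
    (h : IsHeatSubsolution Ω T u) {φ : Euc N → ℝ} (hφ : IsTestFunction Ω φ) :
    WeakDerivLE (fun t => ∫ x in Ω, u (x, t) * φ x) (fun t => ∫ x in Ω, u (x, t) * lap φ x)
      (Ioo 0 T) := by
  intro η hη
  have hφ_smooth : ContDiff ℝ 2 φ := contDiff_infty.1 hφ.contDiff 2
  have hC21 : C21 fun x t => η t * φ x := c21_mul (hη.contDiff.of_le (mod_cast le_top)) hφ_smooth
  have hsupp : tsupport (fun p : Euc N × ℝ => η p.2 * φ p.1) ⊆ tsupport φ ×ˢ tsupport η :=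
    closure_minimal (fun p hp => ⟨subset_tsupport φ (right_ne_zero_of_mul hp),
      subset_tsupport η (left_ne_zero_of_mul hp)⟩)
      ((isClosed_tsupport φ).prod (isClosed_tsupport η))
  have hcompact : HasCompactSupport fun p : Euc N × ℝ => η p.2 * φ p.1 :=
    (hφ.hasCompactSupport.isCompact.prod hη.hasCompactSupport).of_isClosed_subset
      (isClosed_tsupport _) hsupp
  have hnonneg := h _ hC21 hcompact (hsupp.trans (prod_mono hφ.tsupport_subset hη.tsupport_subset))
    fun x t => mul_nonneg (hη.nonneg t) (hφ.nonneg x)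
  have hint := integrable_mul_of_hasCompactSupport hu hC21.continuous_heatAdj
    (hasCompactSupport_heatAdj hcompact)
  simp only [IntegrableOn, volume_restrict_QT] at hu
  rw [volume_restrict_QT] at hnonneg hint
  rw [integral_prod_symm _ hint] at hnonneg
  refine hnonneg.trans_eq (integral_congr_ae ?_)
  filter_upwards [hu.prod_left_ae] with t ht
  have hφi := integrable_mul_of_hasCompactSupport ht hφ.continuous hφ.hasCompactSupport
  have hlapi := integrable_mul_of_hasCompactSupport ht (continuous_lap hφ_smooth)
    (hasCompactSupport_lap hφ.hasCompactSupport)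
  simp only [heatAdj_mul, mul_add, ← mul_assoc]
  rw [integral_add (hφi.mul_const _) (hlapi.mul_const _), integral_mul_const, integral_mul_const]

theorem IsHeatSubsolution.hasExtendedLimit (hT : 0 < T) (hu : IntegrableOn u (QT Ω T))
    (h : IsHeatSubsolution Ω T u) {φ : Euc N → ℝ} (hφ : IsTestFunction Ω φ) :
    HasExtendedLimit (essNhdsGT 0) fun t => ∫ x in Ω, u (x, t) * φ x := by
  have hu' := hu
  rw [IntegrableOn, volume_restrict_QT] at hu'
  exact (h.weakDerivLE hu hφ).hasExtendedLimit hT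
    (integrable_integral_mul hu' hφ.continuous hφ.hasCompactSupport)
    (integrable_integral_mul hu' (continuous_lap (contDiff_infty.1 hφ.contDiff 2))
      (hasCompactSupport_lap hφ.hasCompactSupport))

/-- The measure `u(·,t) dx` on `Ω`; `ENNReal.ofReal` discards the negative part of `u`. -/
def sliceMeasure (Ω : Set (Euc N)) (u : Euc N × ℝ → ℝ) (t : ℝ) : Measure (Euc N) :=
  (volume.restrict Ω).withDensity fun x => ENNReal.ofReal (u (x, t))

theorem eventually_integrableOn_slice (hT : 0 < T) (hu : IntegrableOn u (QT Ω T)) :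
    ∀ᶠ t in essNhdsGT 0, IntegrableOn (fun x => u (x, t)) Ω := by
  rw [IntegrableOn, volume_restrict_QT] at hu
  filter_upwards [mem_inf_of_left (Ioo_mem_nhdsGT hT),
    mem_inf_of_right ((ae_restrict_iff' measurableSet_Ioo).1 hu.prod_left_ae)] with t ht h
  exact h ht

theorem isFiniteMeasure_sliceMeasure {t : ℝ} (hu : IntegrableOn (fun x => u (x, t)) Ω) :
    IsFiniteMeasure (sliceMeasure Ω u t) :=
  isFiniteMeasure_withDensity_ofReal hu.2

theorem integral_sliceMeasure {t : ℝ} (hΩ : MeasurableSet Ω)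
    (hu : IntegrableOn (fun x => u (x, t)) Ω) (hu₀ : ∀ x ∈ Ω, 0 ≤ u (x, t)) (φ : Euc N → ℝ) :
    ∫ x, φ x ∂sliceMeasure Ω u t = ∫ x in Ω, u (x, t) * φ x := by
  rw [sliceMeasure, integral_withDensity_eq_integral_toReal_smul₀ hu.1.aemeasurable.ennreal_ofReal
    (.of_forall fun _ => ENNReal.ofReal_lt_top)]
  refine setIntegral_congr_fun hΩ fun x hx => ?_
  simp [ENNReal.toReal_ofReal (hu₀ x hx)]

theorem eventually_integral_sliceMeasure_eq (hΩ : MeasurableSet Ω) (hT : 0 < T)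
    (hu : IntegrableOn u (QT Ω T)) (hu₀ : ∀ p ∈ QT Ω T, 0 ≤ u p) (φ : Euc N → ℝ) :
    (fun t => ∫ x, φ x ∂sliceMeasure Ω u t) =ᶠ[essNhdsGT 0]
      fun t => ∫ x in Ω, u (x, t) * φ x := by
  filter_upwards [eventually_integrableOn_slice hT hu, mem_inf_of_left (Ioo_mem_nhdsGT hT)]
    with t hut ht
  exact integral_sliceMeasure hΩ hut (fun x hx => hu₀ _ ⟨hx, ht⟩) φ

end Cylinder

theorem stmt_3_general {N : ℕ} {Ω : Set (Euc N)} (hΩ : IsOpen Ω) {T : ℝ} (hT : 0 < T)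
    {u : Euc N × ℝ → ℝ} (hu : IntegrableOn u (QT Ω T)) (hu₀ : ∀ p ∈ QT Ω T, 0 ≤ u p)
    (h : IsHeatSubsolution Ω T u) :
    ∃ S : Set (Euc N), S ⊆ Ω ∧ IsOpen (Ω \ S) ∧
      ∃ ν : Measure (Euc N), RadonOn (Ω \ S) ν ∧ InitTraceOn Ω (Ω \ S) u ν ∧
        ∀ φ : Euc N → ℝ, Continuous φ → HasCompactSupport φ → tsupport φ ⊆ Ω →
          (∀ x, 0 ≤ φ x) → (∃ x ∈ S, 0 < φ x) →
          EssLimInitTop (fun t => ∫ x in Ω, u (x, t) * φ x) := by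
  have hslice := eventually_integral_sliceMeasure_eq hΩ.measurableSet hT hu hu₀
  have hfin : ∀ᶠ t in essNhdsGT 0, IsFiniteMeasureOnCompacts (sliceMeasure Ω u t) := by
    filter_upwards [eventually_integrableOn_slice hT hu] with t ht
    have := isFiniteMeasure_sliceMeasure ht
    infer_instance
  have hlim (φ : Euc N → ℝ) (hφ : IsTestFunction Ω φ) :
      HasExtendedLimit (essNhdsGT 0) fun t => ∫ x, φ x ∂sliceMeasure Ω u t :=
    (h.hasExtendedLimit hT hu hφ).congr (hslice φ).symm
  set R := regularSet (essNhdsGT 0) (sliceMeasure Ω u)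
  have hR : IsOpen (Ω ∩ R) := hΩ.inter isOpen_regularSet
  obtain ⟨ν, hν_compl, hν_compact, hν_lim⟩ := exists_measure_forall_tendsto_integral_of_isOpen hR
    hfin fun φ hφ hφc hφR => exists_tendsto_integral_of_tsupport_subset hfin hΩ hlim hφ hφc hφR
  refine ⟨Ω \ R, sdiff_subset, ?_, ν, ?_⟩ <;> rw [sdiff_sdiff_right_self]
  · exact hR
  · refine ⟨⟨hν_compl, hν_compact⟩,
      fun φ hφ hφc hφR => (hν_lim φ hφ hφc hφR).congr' (hslice φ), ?_⟩
    rintro φ hφ hφc hφΩ hφ₀ ⟨x, hx, hφx⟩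
    exact (tendsto_integral_atTop_of_notMem_regularSet hfin hlim hφ hφc hφΩ hφ₀ hx.2 hφx).congr'
      (hslice φ)

/-- **Proposition 2.8.** A nonnegative `L¹` subsolution of
`∂_t u − Δu + g(u) = 0` in `Q_T` with `g∘u ∈ L¹(Q_T)` admits as initial trace a
positive outer regular Borel measure, i.e. a pair `(S, ν)` with `S ⊆ Ω`
relatively closed in `Ω` and `ν` a positive Radon measure on `R = Ω ∖ S`. -/
theorem stmt_3 {N : ℕ} (hN : 1 ≤ N) (Ω : Set (Euc N)) (hΩo : IsOpen Ω)
    (hΩc : IsConnected Ω) (hΩb : Bornology.IsBounded Ω) (T : ℝ) (hT : 0 < T)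
    (g : ℝ → ℝ) (hg : GoodG g) (u : Euc N × ℝ → ℝ)
    (hu_int : IntegrableOn u (QT Ω T))
    (hu_nonneg : ∀ p ∈ QT Ω T, 0 ≤ u p)
    (hgu_int : IntegrableOn (fun p => g (u p)) (QT Ω T))
    (hsub : ∀ ζ : Euc N → ℝ → ℝ, C21 ζ →
      HasCompactSupport (fun p : Euc N × ℝ => ζ p.1 p.2) →
      tsupport (fun p : Euc N × ℝ => ζ p.1 p.2) ⊆ QT Ω T →
      (∀ x t, 0 ≤ ζ x t) →
      (∫ p in QT Ω T,
        (-(u p) * deriv (ζ p.1) p.2 - u p * lap (fun y => ζ y p.2) p.1 + ζ p.1 p.2 * g (u p)))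
        ≤ 0) :
    ∃ S : Set (Euc N), S ⊆ Ω ∧ IsOpen (Ω \ S) ∧
      ∃ ν : Measure (Euc N), RadonOn (Ω \ S) ν ∧ InitTraceOn Ω (Ω \ S) u ν ∧
        ∀ φ : Euc N → ℝ, Continuous φ → HasCompactSupport φ → tsupport φ ⊆ Ω →
          (∀ x, 0 ≤ φ x) → (∃ x ∈ S, 0 < φ x) →
          EssLimInitTop (fun t => ∫ x in Ω, u (x, t) * φ x) :=
  stmt_3_general hΩo hT hu_int hu_nonneg <| isHeatSubsolution_of_absorption
    (fun r => (hg.2.2 _ (min_le_right r 0)).ge.trans (hg.2.1 (min_le_left r 0))) hu_int hgu_int hsub
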